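/- arXiv:2102.05289 — 3 statements merged into one kernel-verified Lean document; each statement's English description precedes it below -/
import Mathlib

section
/- Let l, u ∈ ℝ^C with l_j ≤ u_j for all j, and let y be a class. Define f_LB ∈ ℝ^C by f_{LB,y} = l_y and f_{LB,j} = u_j for j ≠ y. Then f_LB lies in the box {z ∈ ℝ^C : l_j ≤ z_j ≤ u_j for all j} and σ_y(f_LB) ≤ σ_y(z) for every z in this box; hence σ_y(f_LB) equals the minimum of σ_y over the box. -/
/-- Softmax probability of class `y` for logits `z ∈ ℝ^C`. -/
noncomputable def softmax {C : ℕ} (y : Fin C) (z : Fin C → ℝ) : ℝ :=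
  Real.exp (z y) / ∑ j, Real.exp (z j)

/-- The corner vector `f_LB` with `f_{LB,y} = l y` and `f_{LB,j} = u j` for `j ≠ y`. -/
def cornerLB {C : ℕ} (y : Fin C) (l u : Fin C → ℝ) : Fin C → ℝ :=
  fun j => if j = y then l j else u j

/-- `f_LB` lies in the box `[l, u]`, `σ_y(f_LB) ≤ σ_y(z)` for every `z`
in the box, and hence `σ_y(f_LB)` is the minimum of `σ_y` over the box. -/
theorem cornerLB_isLeast {C : ℕ} (l u : Fin C → ℝ) (hlu : ∀ j, l j ≤ u j) (y : Fin C) :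
    (∀ j, l j ≤ cornerLB y l u j ∧ cornerLB y l u j ≤ u j) ∧
    (∀ z : Fin C → ℝ, (∀ j, l j ≤ z j ∧ z j ≤ u j) →
      softmax y (cornerLB y l u) ≤ softmax y z) ∧
    IsLeast (softmax y '' {z : Fin C → ℝ | ∀ j, l j ≤ z j ∧ z j ≤ u j})
      (softmax y (cornerLB y l u)) := by
  have h1 : ∀ j, l j ≤ cornerLB y l u j ∧ cornerLB y l u j ≤ u j := by
    intro j
    unfold cornerLB
    split_ifs
    · exact ⟨le_rfl, hlu j⟩
    · exact ⟨hlu j, le_rfl⟩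
  have h2 : ∀ z : Fin C → ℝ, (∀ j, l j ≤ z j ∧ z j ≤ u j) →
      softmax y (cornerLB y l u) ≤ softmax y z := by
    intro z hz
    have hpos : ∀ w : Fin C → ℝ, 0 < ∑ j, Real.exp (w j) := fun w =>
      Finset.sum_pos (fun j _ => Real.exp_pos _) ⟨y, Finset.mem_univ y⟩
    unfold softmax
    rw [div_le_div_iff₀ (hpos _) (hpos _), Finset.mul_sum, Finset.mul_sum]
    refine Finset.sum_le_sum fun j _ => ?_
    rw [← Real.exp_add, ← Real.exp_add, Real.exp_le_exp]
    by_cases hj : j = y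
    · subst hj
      exact (add_comm _ _).le
    · have a := (hz y).1
      have b := (hz j).2
      simp only [cornerLB, if_neg hj, if_true]
      linarith
  refine ⟨h1, h2, ⟨_, h1, rfl⟩, ?_⟩
  rintro _ ⟨z, hz, rfl⟩
  exact h2 z hz
end

section
/- Let l, u ∈ ℝ^C with l_j ≤ u_j for all j, and let c' be a class. Define f_UB ∈ ℝ^C by f_{UB,c'} = u_{c'} and f_{UB,j} = l_j for j ≠ c'. Then f_UB lies in the box {z ∈ ℝ^C : l_j ≤ z_j ≤ u_j for all j} and σ_{c'}(z) ≤ σ_{c'}(f_UB) for every z in this box; hence σ_{c'}(f_UB) equals the maximum of σ_{c'} over the box. -/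
/-- The corner vector `f_UB` with `f_{UB,c'} = u c'` and `f_{UB,j} = l j` for `j ≠ c'`. -/
def cornerUB {C : ℕ} (c' : Fin C) (l u : Fin C → ℝ) : Fin C → ℝ :=
  fun j => if j = c' then u j else l j

/-- `f_UB` lies in the box `[l, u]`, `σ_{c'}(z) ≤ σ_{c'}(f_UB)` for every `z`
in the box, and hence `σ_{c'}(f_UB)` is the maximum of `σ_{c'}` over the box. -/
theorem cornerUB_isGreatest {C : ℕ} (l u : Fin C → ℝ) (hlu : ∀ j, l j ≤ u j) (c' : Fin C) :
    (∀ j, l j ≤ cornerUB c' l u j ∧ cornerUB c' l u j ≤ u j) ∧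
    (∀ z : Fin C → ℝ, (∀ j, l j ≤ z j ∧ z j ≤ u j) →
      softmax c' z ≤ softmax c' (cornerUB c' l u)) ∧
    IsGreatest (softmax c' '' {z : Fin C → ℝ | ∀ j, l j ≤ z j ∧ z j ≤ u j})
      (softmax c' (cornerUB c' l u)) := by
  have h1 : ∀ j, l j ≤ cornerUB c' l u j ∧ cornerUB c' l u j ≤ u j := by
    intro j
    unfold cornerUB
    split_ifs
    · exact ⟨hlu j, le_rfl⟩
    · exact ⟨le_rfl, hlu j⟩
  have h2 : ∀ z : Fin C → ℝ, (∀ j, l j ≤ z j ∧ z j ≤ u j) →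
      softmax c' z ≤ softmax c' (cornerUB c' l u) := by
    intro z hz
    have hpos : ∀ w : Fin C → ℝ, 0 < ∑ j, Real.exp (w j) := fun w =>
      Finset.sum_pos (fun j _ => Real.exp_pos _) ⟨c', Finset.mem_univ _⟩
    unfold softmax
    rw [div_le_div_iff₀ (hpos _) (hpos _), Finset.mul_sum, Finset.mul_sum]
    refine Finset.sum_le_sum fun j _ => ?_
    rw [← Real.exp_add, ← Real.exp_add, Real.exp_le_exp]
    by_cases h : j = c'
    · subst h
      linarith
    · have e1 : cornerUB c' l u j = l j := if_neg h
      have e2 : cornerUB c' l u c' = u c' := if_pos rfl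
      rw [e1, e2]
      linarith [(hz j).1, (hz c').2]
  refine ⟨h1, h2, ⟨_, h1, rfl⟩, ?_⟩
  rintro _ ⟨z, hz, rfl⟩
  exact h2 z hz
end

section
/- Consider a K-layer feedforward network with monotone nondecreasing activation h, an input x ∈ ℝ^{n_0} and ε ≥ 0, and run interval bound propagation (IBP). Then for every x' ∈ ℝ^{n_0} with ‖x − x'‖_∞ ≤ ε and every k = 1,…,K, the pre-activations computed on x' satisfy f_{(k)}^L ≤ f_{(k)}(x') ≤ f_{(k)}^U componentwise, and for k = 1,…,K−1 the activations satisfy φ_{(k)}^L ≤ φ_{(k)}(x') ≤ φ_{(k)}^U componentwise. -/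
/-- Activations of a feedforward network: `netPhi … x 0 = x` (the input `φ_(0)`) and
`netPhi … x (k+1) = h (W_k (netPhi … x k) + b_k)` (the activation `φ_(k+1)`).
For a `K`-layer network only the values with `k ≤ K - 1` are used. -/
noncomputable def netPhi (n : ℕ → ℕ)
    (W : ∀ k : ℕ, Matrix (Fin (n (k + 1))) (Fin (n k)) ℝ)
    (b : ∀ k : ℕ, Fin (n (k + 1)) → ℝ) (h : ℝ → ℝ)
    (x : Fin (n 0) → ℝ) : (k : ℕ) → Fin (n k) → ℝ
  | 0 => x
  | (k + 1) => fun i => h (((W k).mulVec (netPhi n W b h x k) + b k) i)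

/-- Pre-activations: `netPre … x k = W_k φ_(k) + b_k`, i.e. the pre-activation
`f_(k+1)` of the network.  The output of a `K`-layer network is `f^w(x) = netPre … x (K-1)`. -/
noncomputable def netPre (n : ℕ → ℕ)
    (W : ∀ k : ℕ, Matrix (Fin (n (k + 1))) (Fin (n k)) ℝ)
    (b : ∀ k : ℕ, Fin (n (k + 1)) → ℝ) (h : ℝ → ℝ)
    (x : Fin (n 0) → ℝ) (k : ℕ) : Fin (n (k + 1)) → ℝ :=
  (W k).mulVec (netPhi n W b h x k) + b k

/-- Interval bound propagation on the activations: `ibpPhi … x ε k = (φ_(k)^L, φ_(k)^U)`.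
At `k = 0` the bounds are `x ∓ ε·𝟙`; at `k+1` they are `h (μ_{k+1} ∓ r_{k+1})` with
`μ_{k+1} = W_k (φ_(k)^U + φ_(k)^L)/2 + b_k` and `r_{k+1} = |W_k| (φ_(k)^U − φ_(k)^L)/2`. -/
noncomputable def ibpPhi (n : ℕ → ℕ)
    (W : ∀ k : ℕ, Matrix (Fin (n (k + 1))) (Fin (n k)) ℝ)
    (b : ∀ k : ℕ, Fin (n (k + 1)) → ℝ) (h : ℝ → ℝ)
    (x : Fin (n 0) → ℝ) (ε : ℝ) : (k : ℕ) → (Fin (n k) → ℝ) × (Fin (n k) → ℝ)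
  | 0 => (fun i => x i - ε, fun i => x i + ε)
  | (k + 1) =>
      let L := (ibpPhi n W b h x ε k).1
      let U := (ibpPhi n W b h x ε k).2
      let μ := (W k).mulVec (fun i => (U i + L i) / 2) + b k
      let r := (Matrix.of fun i j => |W k i j|).mulVec (fun i => (U i - L i) / 2)
      (fun i => h (μ i - r i), fun i => h (μ i + r i))

/-- Interval bound propagation on the pre-activations:
`ibpPre … x ε k = (f_(k+1)^L, f_(k+1)^U) = (μ_{k+1} − r_{k+1}, μ_{k+1} + r_{k+1})`.
The IBP output bounds of a `K`-layer network are `(f^{w,L,ε}, f^{w,U,ε}) = ibpPre … x ε (K-1)`. -/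
noncomputable def ibpPre (n : ℕ → ℕ)
    (W : ∀ k : ℕ, Matrix (Fin (n (k + 1))) (Fin (n k)) ℝ)
    (b : ∀ k : ℕ, Fin (n (k + 1)) → ℝ) (h : ℝ → ℝ)
    (x : Fin (n 0) → ℝ) (ε : ℝ) (k : ℕ) : (Fin (n (k + 1)) → ℝ) × (Fin (n (k + 1)) → ℝ) :=
  let L := (ibpPhi n W b h x ε k).1
  let U := (ibpPhi n W b h x ε k).2
  let μ := (W k).mulVec (fun i => (U i + L i) / 2) + b k
  let r := (Matrix.of fun i j => |W k i j|).mulVec (fun i => (U i - L i) / 2)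
  (fun i => μ i - r i, fun i => μ i + r i)

theorem ibp_affine_aux {m p : ℕ} (A : Matrix (Fin m) (Fin p) ℝ) (c : Fin m → ℝ)
    (L U v : Fin p → ℝ) (hv : ∀ j, L j ≤ v j ∧ v j ≤ U j) (i : Fin m) :
    (A.mulVec (fun j => (U j + L j) / 2) + c) i
        - (Matrix.of fun i j => |A i j|).mulVec (fun j => (U j - L j) / 2) i
      ≤ (A.mulVec v + c) i ∧
    (A.mulVec v + c) i ≤ (A.mulVec (fun j => (U j + L j) / 2) + c) i
        + (Matrix.of fun i j => |A i j|).mulVec (fun j => (U j - L j) / 2) i := by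
  have key : |∑ j, A i j * v j - ∑ j, A i j * ((U j + L j) / 2)|
      ≤ ∑ j, |A i j| * ((U j - L j) / 2) := by
    rw [← Finset.sum_sub_distrib]
    refine (Finset.abs_sum_le_sum_abs _ _).trans (Finset.sum_le_sum fun j _ => ?_)
    rw [← mul_sub, abs_mul]
    refine mul_le_mul_of_nonneg_left ?_ (abs_nonneg _)
    rw [abs_le]
    constructor <;> linarith [(hv j).1, (hv j).2]
  rw [abs_le] at key
  simp only [Pi.add_apply, Matrix.mulVec, dotProduct, Matrix.of_apply]
  constructor <;> linarith [key.1, key.2]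

/-- validity of the intermediate IBP bounds.  For a `K`-layer network
(`K ≥ 1`) with monotone nondecreasing activation `h`, input `x` and radius `ε ≥ 0`,
every `x'` with `‖x − x'‖_∞ ≤ ε` has its pre-activations `f_(k)` (for `k = 1,…,K`,
i.e. `netPre … x' k` for `k = 0,…,K−1`) inside `[f_(k)^L, f_(k)^U]` and its activations
`φ_(k)` (for `k = 1,…,K−1`) inside `[φ_(k)^L, φ_(k)^U]`, componentwise. -/
theorem ibp_intermediate_bounds (n : ℕ → ℕ)
    (W : ∀ k : ℕ, Matrix (Fin (n (k + 1))) (Fin (n k)) ℝ)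
    (b : ∀ k : ℕ, Fin (n (k + 1)) → ℝ) (h : ℝ → ℝ) (hmono : Monotone h)
    (K : ℕ) (hK : 1 ≤ K) (x : Fin (n 0) → ℝ) (ε : ℝ) (hε : 0 ≤ ε)
    (x' : Fin (n 0) → ℝ) (hx' : ‖x - x'‖ ≤ ε) :
    (∀ k, k < K → ∀ i,
        (ibpPre n W b h x ε k).1 i ≤ netPre n W b h x' k i ∧
        netPre n W b h x' k i ≤ (ibpPre n W b h x ε k).2 i) ∧
    (∀ k, 1 ≤ k → k ≤ K - 1 → ∀ i,
        (ibpPhi n W b h x ε k).1 i ≤ netPhi n W b h x' k i ∧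
        netPhi n W b h x' k i ≤ (ibpPhi n W b h x ε k).2 i) := by
  have hphi : ∀ k, ∀ i, (ibpPhi n W b h x ε k).1 i ≤ netPhi n W b h x' k i ∧
      netPhi n W b h x' k i ≤ (ibpPhi n W b h x ε k).2 i := by
    intro k
    induction k with
    | zero =>
      intro i
      have h1 := (norm_le_pi_norm (x - x') i).trans hx'
      rw [Real.norm_eq_abs, Pi.sub_apply, abs_le] at h1
      simp only [ibpPhi, netPhi]
      constructor <;> linarith [h1.1, h1.2]
    | succ k ih =>
      intro i
      have h1 := ibp_affine_aux (W k) (b k) _ _ _ ih i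
      simp only [ibpPhi, netPhi]
      exact ⟨hmono h1.1, hmono h1.2⟩
  exact ⟨fun k _ i => ibp_affine_aux (W k) (b k) _ _ _ (hphi k) i, fun k _ _ => hphi k⟩
end
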